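/- Let P1 be an l×k matrix over a finite field 𝔽_q such that every column of P1 has Hamming weight at least t and the supports of any two distinct columns of P1 intersect in at most one position. Then every nonzero linear combination of at most t columns of P1 has Hamming weight at least t; in particular, any t distinct columns of P1 are linearly independent over 𝔽_q. -/

import Mathlib

/-!
A row in which exactly one of the columns being combined is nonzero cannot cancel. If `s ≤ t`
columns are involved, each of them has at least `t - (s - 1)` such rows of its own, since it meets
each of the other `s - 1` columns in at most one row. These sets of rows are disjoint for different
columns, so the combination has weight at least `s * (t - (s - 1)) = t + (s - 1) * (t - s) ≥ t`.
-/

open Matrix Finset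

/-- The support of a vector, as a `Finset`. -/
def vsupp {α F : Type*} [Fintype α] [Zero F] [DecidableEq F] (c : α → F) : Finset α :=
  Finset.univ.filter (fun a => c a ≠ 0)

section PrivatePart

variable {ι α : Type*} [DecidableEq ι] [DecidableEq α] {A : ι → Finset α} {T : Finset ι}

/-- The private part of the `j`-th member of a family of sets with respect to the members indexed
by `T`: the points of `A j` that lie in no other `A j'` with `j' ∈ T`. The index `j` itself need
not belong to `T`. -/
def privatePart (A : ι → Finset α) (T : Finset ι) (j : ι) : Finset α :=
  A j \ (T.erase j).biUnion A

theorem mem_privatePart {j : ι} {a : α} :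
    a ∈ privatePart A T j ↔ a ∈ A j ∧ ∀ j' ∈ T, j' ≠ j → a ∉ A j' := by
  simp only [privatePart, mem_sdiff, mem_biUnion, mem_erase, not_exists, not_and]
  grind

theorem pairwiseDisjoint_privatePart (A : ι → Finset α) (T : Finset ι) :
    (T : Set ι).PairwiseDisjoint (privatePart A T) := by
  intro j hj j' _ hne
  exact disjoint_left.2 fun a ha ha' =>
    (mem_privatePart.1 ha').2 j hj hne (mem_privatePart.1 ha).1

theorem card_sub_le_card_privatePart {r : ℕ} {j : ι} (hj : j ∈ T)
    (hinter : ∀ j' ∈ T, j ≠ j' → #(A j ∩ A j') ≤ r) :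
    #(A j) - (#T - 1) * r ≤ #(privatePart A T j) := by
  have hshared : #(A j ∩ (T.erase j).biUnion A) ≤ (#T - 1) * r := by
    rw [inter_biUnion, ← card_erase_of_mem hj]
    exact card_biUnion_le_card_mul _ _ _ fun j' hj' =>
      hinter j' (mem_of_mem_erase hj') (ne_of_mem_erase hj').symm
  have hsplit := card_sdiff_add_card_inter (A j) ((T.erase j).biUnion A)
  rw [privatePart]
  lia

theorem card_mul_sub_le_card_biUnion_privatePart {t r : ℕ} (hcard : ∀ j ∈ T, t ≤ #(A j))
    (hinter : ∀ j ∈ T, ∀ j' ∈ T, j ≠ j' → #(A j ∩ A j') ≤ r) :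
    #T * (t - (#T - 1) * r) ≤ #(T.biUnion (privatePart A T)) := by
  rw [card_biUnion (pairwiseDisjoint_privatePart A T)]
  refine card_nsmul_le_sum T _ _ fun j hj => ?_
  calc t - (#T - 1) * r ≤ #(A j) - (#T - 1) * r := Nat.sub_le_sub_right (hcard j hj) _
    _ ≤ #(privatePart A T j) := card_sub_le_card_privatePart hj (hinter j hj)

end PrivatePart

theorem le_mul_sub_pred {s t : ℕ} (hs : 0 < s) (hst : s ≤ t) : t ≤ s * (t - (s - 1)) := by
  obtain ⟨a, rfl⟩ := Nat.exists_eq_add_one.2 hs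
  obtain ⟨d, rfl⟩ := Nat.exists_eq_add_of_le hst
  have hsub : a + 1 + d - (a + 1 - 1) = d + 1 := by lia
  rw [hsub]
  nlinarith [Nat.zero_le (a * d)]

section Support

variable {α R : Type*} [Fintype α] [Zero R] [DecidableEq R] {c : α → R}

theorem mem_vsupp {a : α} : a ∈ vsupp c ↔ c a ≠ 0 := by
  simp [vsupp]

theorem vsupp_eq_empty_iff : vsupp c = ∅ ↔ c = 0 := by
  simp [vsupp, filter_eq_empty_iff, funext_iff]

theorem card_vsupp_pos_iff : 0 < #(vsupp c) ↔ c ≠ 0 := by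
  rw [card_pos, nonempty_iff_ne_empty, Ne, vsupp_eq_empty_iff]

theorem vsupp_subset_iff {S : Finset α} : vsupp c ⊆ S ↔ ∀ a ∉ S, c a = 0 := by
  simp only [subset_iff, mem_vsupp, not_imp_comm]

theorem mem_vsupp_col {n : Type*} {A : Matrix α n R} {i : α} {j : n} :
    i ∈ vsupp (A.col j) ↔ A i j ≠ 0 :=
  mem_vsupp (c := A.col j)

end Support

section MulVec

variable {m n R : Type*} [Fintype m] [Fintype n] [DecidableEq m] [DecidableEq R]

theorem biUnion_privatePart_subset_vsupp_mulVec [DecidableEq n] [NonUnitalNonAssocSemiring R]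
    [NoZeroDivisors R] (A : Matrix m n R) (c : n → R) :
    (vsupp c).biUnion (privatePart (fun j => vsupp (A.col j)) (vsupp c)) ⊆ vsupp (A *ᵥ c) := by
  refine biUnion_subset.2 fun j hj i hi => mem_vsupp.2 ?_
  obtain ⟨hmem, hother⟩ := mem_privatePart.1 hi
  have hij : A i j ≠ 0 := mem_vsupp_col.1 hmem
  have hzero : ∀ j' ≠ j, A i j' * c j' = 0 := by
    intro j' hne
    by_cases hj' : j' ∈ vsupp c
    · have hij' : A i j' = 0 := not_not.1 (mt mem_vsupp_col.2 (hother j' hj' hne))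
      rw [hij', zero_mul]
    · rw [not_not.1 (mt mem_vsupp.2 hj'), mul_zero]
  have hsingle : (A *ᵥ c) i = A i j * c j := Fintype.sum_eq_single j hzero
  rw [hsingle]
  exact mul_ne_zero hij (mem_vsupp.1 hj)

theorem le_card_vsupp_mulVec [NonUnitalNonAssocSemiring R] [NoZeroDivisors R] {A : Matrix m n R}
    {t : ℕ} (hcol : ∀ j, t ≤ #(vsupp (A.col j)))
    (hinter : ∀ j₁ j₂, j₁ ≠ j₂ → #(vsupp (A.col j₁) ∩ vsupp (A.col j₂)) ≤ 1)
    {c : n → R} (hc : c ≠ 0) (hct : #(vsupp c) ≤ t) :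
    t ≤ #(vsupp (A *ᵥ c)) := by
  classical
  calc t ≤ #(vsupp c) * (t - (#(vsupp c) - 1)) := le_mul_sub_pred (card_vsupp_pos_iff.2 hc) hct
    _ = #(vsupp c) * (t - (#(vsupp c) - 1) * 1) := by rw [mul_one]
    _ ≤ #((vsupp c).biUnion (privatePart (fun j => vsupp (A.col j)) (vsupp c))) :=
      card_mul_sub_le_card_biUnion_privatePart (fun j _ => hcol j) fun j _ j' _ => hinter j j'
    _ ≤ #(vsupp (A *ᵥ c)) := card_le_card (biUnion_privatePart_subset_vsupp_mulVec A c)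

theorem linearIndependent_col_of_card_le [CommRing R] [NoZeroDivisors R] {A : Matrix m n R}
    {t : ℕ} (hcol : ∀ j, t ≤ #(vsupp (A.col j)))
    (hinter : ∀ j₁ j₂, j₁ ≠ j₂ → #(vsupp (A.col j₁) ∩ vsupp (A.col j₂)) ≤ 1)
    (hn : Fintype.card n ≤ t) : LinearIndependent R A.col := by
  refine mulVec_injective_iff.1 ((injective_iff_map_eq_zero A.mulVecLin).2 fun c hAc => ?_)
  by_contra hc
  have hct : #(vsupp c) ≤ t := (card_le_univ _).trans hn
  have hpos : 0 < #(vsupp (A *ᵥ c)) :=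
    (card_vsupp_pos_iff.2 hc).trans_le (hct.trans (le_card_vsupp_mulVec hcol hinter hc hct))
  exact card_vsupp_pos_iff.1 hpos hAc

theorem stmt5_general [CommRing R] [NoZeroDivisors R] (A : Matrix m n R) (t : ℕ)
    (hcol : ∀ j, t ≤ #(vsupp (A.col j)))
    (hinter : ∀ j₁ j₂, j₁ ≠ j₂ → #(vsupp (A.col j₁) ∩ vsupp (A.col j₂)) ≤ 1) :
    (∀ (S : Finset n) (c : n → R), #S ≤ t → (∀ j ∉ S, c j = 0) → c ≠ 0 →
      t ≤ #(vsupp (A *ᵥ c))) ∧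
    ∀ S : Finset n, #S ≤ t → LinearIndependent R fun j : S => A.col j := by
  refine ⟨fun S c hS hcS hc => ?_, fun S hS => ?_⟩
  · exact le_card_vsupp_mulVec hcol hinter hc ((card_le_card (vsupp_subset_iff.2 hcS)).trans hS)
  · exact linearIndependent_col_of_card_le (A := A.submatrix id ((↑) : S → n)) (fun j => hcol j)
      (fun j₁ j₂ hne => hinter j₁ j₂ (Subtype.coe_ne_coe.2 hne)) (by rwa [Fintype.card_coe])

end MulVec

/-- If every column of `P1` has Hamming weight at least `t` and the
supports of any two distinct columns intersect in at most one position, then every nonzero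
linear combination of at most `t` columns of `P1` has Hamming weight at least `t`; in
particular, any `t` distinct columns of `P1` are linearly independent. -/
theorem stmt5 {l k : ℕ} {F : Type*} [Field F] [Fintype F] [DecidableEq F]
    (P1 : Matrix (Fin l) (Fin k) F) (t : ℕ)
    (hcol : ∀ j : Fin k, t ≤ (vsupp (fun i => P1 i j)).card)
    (hint : ∀ j₁ j₂ : Fin k, j₁ ≠ j₂ →
      (vsupp (fun i => P1 i j₁) ∩ vsupp (fun i => P1 i j₂)).card ≤ 1) :
    (∀ (S : Finset (Fin k)) (c : Fin k → F), S.card ≤ t → (∀ j ∉ S, c j = 0) →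
      P1.mulVec c ≠ 0 → t ≤ (vsupp (P1.mulVec c)).card) ∧
    (∀ S : Finset (Fin k), S.card = t →
      LinearIndependent F (fun j : {x // x ∈ S} => fun i => P1 i j.1)) := by
  obtain ⟨hweight, hindep⟩ := stmt5_general P1 t hcol hint
  exact ⟨fun S c hS hcS hne => hweight S c hS hcS (by rintro rfl; exact hne (mulVec_zero P1)),
    fun S hS => hindep S hS.le⟩
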